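/- Fix ε > 0, B_w > 1, δ ∈ (0,1). Suppose d^D = d^{π_D}, and that for α = α'_ε := ε/(4B_f): v*_{α'_ε,B_w} ∈ V, w*_{α'_ε,B_w} ∈ W, 0 ≤ w ≤ B_w for all w ∈ W, f is M_f-strongly convex with |f'| ≤ B_{f'} and |f| ≤ B_f on [0,B_w], and ‖v‖_∞ ≤ B_v = (α'_ε·B_{f'}+1)/(1−γ) for all v ∈ V. Then there is a universal constant C1 such that if n ≥ C1·(ε·B_f + 4·B_w·B_e·B_f)²/(ε⁶·M_f²·(1−γ)⁴)·log(4|V||W|/δ) and n0 ≥ C1·(4·B_v·B_f)²/(ε⁶·M_f²·(1−γ)²)·log(4|V|/δ), the output π̂ of PRO-RL with input α = α'_ε satisfies J(π*_{0,B_w}) − J(π̂) ≤ ε with probability at least 1−δ, where B_e = (1+γ)B_v+1. -/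

import Mathlib

open MeasureTheory
open scoped BigOperators ENNReal

namespace ProRL

/-- The discrete measure on a type induced by a real-valued weight function. -/
noncomputable def discMeasure {X : Type*} [MeasurableSpace X] (p : X → ℝ) : Measure X :=
  Measure.sum fun x => ENNReal.ofReal (p x) • Measure.dirac x

variable {S A : Type*} [Fintype S] [Fintype A]

/-- The `t`-step state-action distribution of policy `π` started from `μ0`. -/
noncomputable def saDist (P : S → A → S → ℝ) (μ0 : S → ℝ) (π : S → A → ℝ) :
    ℕ → S → A → ℝ
  | 0 => fun s a => μ0 s * π s a
  | t + 1 => fun s a =>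
      (∑ s' : S, ∑ a' : A, saDist P μ0 π t s' a' * P s' a' s) * π s a

/-- The discounted state-action occupancy `d^π(s,a)`. -/
noncomputable def occ (P : S → A → S → ℝ) (μ0 : S → ℝ) (γ : ℝ) (π : S → A → ℝ)
    (s : S) (a : A) : ℝ :=
  (1 - γ) * ∑' t : ℕ, γ ^ t * saDist P μ0 π t s a

/-- The (normalized) expected discounted return `J(π) = E_{d^π}[r]`. -/
noncomputable def Jret (P : S → A → S → ℝ) (r : S → A → ℝ) (μ0 : S → ℝ) (γ : ℝ)
    (π : S → A → ℝ) : ℝ :=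
  ∑ s : S, ∑ a : A, occ P μ0 γ π s a * r s a

/-- `π` is a (stationary, stochastic) policy. -/
def IsPolicy (π : S → A → ℝ) : Prop :=
  (∀ s a, 0 ≤ π s a) ∧ ∀ s, ∑ a : A, π s a = 1

/-- The Bellman residual `e_v(s,a) = r(s,a) + γ ∑_{s'} P(s'|s,a) v(s') − v(s)`. -/
noncomputable def eV (P : S → A → S → ℝ) (r : S → A → ℝ) (γ : ℝ) (v : S → ℝ)
    (s : S) (a : A) : ℝ :=
  r s a + γ * ∑ s' : S, P s a s' * v s' - v s

/-- The population Lagrangian `L_α(v,w)`. -/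
noncomputable def Lag (P : S → A → S → ℝ) (r : S → A → ℝ) (μ0 : S → ℝ) (γ : ℝ)
    (dD : S → A → ℝ) (f : ℝ → ℝ) (α : ℝ) (v : S → ℝ) (w : S → A → ℝ) : ℝ :=
  (1 - γ) * ∑ s : S, μ0 s * v s
    - α * ∑ s : S, ∑ a : A, dD s a * f (w s a)
    + ∑ s : S, ∑ a : A, dD s a * (w s a * eV P r γ v s a)

/-- The empirical Lagrangian `L̂_α(v,w)` built from the transition dataset `D`
(`D i = ((sᵢ,aᵢ), s'ᵢ)`, with `rᵢ = r sᵢ aᵢ`) and initial-state dataset `D0`. -/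
noncomputable def empLag (r : S → A → ℝ) (γ : ℝ) (f : ℝ → ℝ) (α : ℝ) {n n0 : ℕ}
    (D : Fin n → (S × A) × S) (D0 : Fin n0 → S) (v : S → ℝ) (w : S → A → ℝ) : ℝ :=
  (1 - γ) * ((n0 : ℝ)⁻¹ * ∑ j : Fin n0, v (D0 j))
    - α * ((n : ℝ)⁻¹ * ∑ i : Fin n, f (w (D i).1.1 (D i).1.2))
    + (n : ℝ)⁻¹ * ∑ i : Fin n,
        w (D i).1.1 (D i).1.2 *
          (r (D i).1.1 (D i).1.2 + γ * v (D i).2 - v (D i).1.1)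

/-- Per-state normalization of a state-action weight into a policy
(uniform where the state marginal is not positive). -/
noncomputable def normPolicy (d : S → A → ℝ) (s : S) (a : A) : ℝ :=
  if 0 < ∑ a' : A, d s a' then d s a / ∑ a' : A, d s a'
  else (Fintype.card A : ℝ)⁻¹

/-- Policy extraction from a density ratio `w` and a behavior policy `piD`
(uniform where the normalizer vanishes). -/
noncomputable def extractPolicy (piD w : S → A → ℝ) (s : S) (a : A) : ℝ :=
  if 0 < ∑ a' : A, w s a' * piD s a' then
    w s a * piD s a / ∑ a' : A, w s a' * piD s a'
  else (Fintype.card A : ℝ)⁻¹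

/-- Behavior policy `π_D(a|s)` obtained from the data distribution `d^D`. -/
noncomputable def behPolicy (dD : S → A → ℝ) : S → A → ℝ := normPolicy dD

/-- The state-action measure `d(s,a) = w(s,a)·d^D(s,a)`. -/
noncomputable def dstar (dD w : S → A → ℝ) : S → A → ℝ := fun s a => w s a * dD s a

/-- The weighted `L²(d^D)` norm of a state-action function. -/
noncomputable def l2nrm (dD g : S → A → ℝ) : ℝ :=
  Real.sqrt (∑ s : S, ∑ a : A, dD s a * g s a ^ 2)

/-- `‖π(·|s) − π'(·|s)‖₁`. -/
noncomputable def l1Pol (π π' : S → A → ℝ) (s : S) : ℝ := ∑ a : A, |π s a - π' s a|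

/-- `E_{s ∼ d}[‖π(·|s) − π'(·|s)‖₁]` where `d` is a state-action distribution. -/
noncomputable def expL1 (d π π' : S → A → ℝ) : ℝ :=
  ∑ s : S, (∑ a : A, d s a) * l1Pol π π' s

/-- The statistical error term `ε_stat`. -/
noncomputable def epsStat (γ α Bv Bf Bw Be δ : ℝ) (nV nW n n0 : ℕ) : ℝ :=
  (1 - γ) * Bv * Real.sqrt (2 * Real.log (4 * (nV : ℝ) / δ) / (n0 : ℝ))
    + (α * Bf + Bw * Be) *
        Real.sqrt (2 * Real.log (4 * ((nV : ℝ) * (nW : ℝ)) / δ) / (n : ℝ))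

/-- The Bellman flow equations for a state-action measure `d`. -/
def BellmanFlow (P : S → A → S → ℝ) (μ0 : S → ℝ) (γ : ℝ) (d : S → A → ℝ) : Prop :=
  ∀ s : S, ∑ a : A, d s a
    = (1 - γ) * μ0 s + γ * ∑ s' : S, ∑ a' : A, P s' a' s * d s' a'

/-- `(v,w)` is a saddle point of `max_{w ≥ 0} min_v L_α(v,w)`. -/
def IsSaddle (P : S → A → S → ℝ) (r : S → A → ℝ) (μ0 : S → ℝ) (γ : ℝ)
    (dD : S → A → ℝ) (f : ℝ → ℝ) (α : ℝ) (v : S → ℝ) (w : S → A → ℝ) : Prop :=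
  (∀ s a, 0 ≤ w s a) ∧
  (∀ v' : S → ℝ, Lag P r μ0 γ dD f α v w ≤ Lag P r μ0 γ dD f α v' w) ∧
  (∀ w' : S → A → ℝ, (∀ s a, 0 ≤ w' s a) →
    Lag P r μ0 γ dD f α v w' ≤ Lag P r μ0 γ dD f α v w)

/-- `(v,w)` is a saddle point of `max_{0 ≤ w ≤ Bw} min_v L_α(v,w)` (constrained LP). -/
def IsSaddleB (P : S → A → S → ℝ) (r : S → A → ℝ) (μ0 : S → ℝ) (γ : ℝ)
    (dD : S → A → ℝ) (f : ℝ → ℝ) (α Bw : ℝ) (v : S → ℝ) (w : S → A → ℝ) : Prop :=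
  (∀ s a, 0 ≤ w s a ∧ w s a ≤ Bw) ∧
  (∀ v' : S → ℝ, Lag P r μ0 γ dD f α v w ≤ Lag P r μ0 γ dD f α v' w) ∧
  (∀ w' : S → A → ℝ, (∀ s a, 0 ≤ w' s a ∧ w' s a ≤ Bw) →
    Lag P r μ0 γ dD f α v w' ≤ Lag P r μ0 γ dD f α v w)

/-- `(vhat, what)` is an exact max-min point of the empirical Lagrangian over `V × W`:
`vhat ∈ argmin_{v ∈ V} L̂(v, what)` and `what ∈ argmax_{w ∈ W} min_{v ∈ V} L̂(v, w)`. -/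
def IsProRLOutput (r : S → A → ℝ) (γ : ℝ) (f : ℝ → ℝ) (α : ℝ)
    (V : Finset (S → ℝ)) (W : Finset (S → A → ℝ)) {n n0 : ℕ}
    (D : Fin n → (S × A) × S) (D0 : Fin n0 → S)
    (vhat : S → ℝ) (what : S → A → ℝ) : Prop :=
  vhat ∈ V ∧ what ∈ W ∧
  (∀ v ∈ V, empLag r γ f α D D0 vhat what ≤ empLag r γ f α D D0 v what) ∧
  ∀ w ∈ W, ∀ vw ∈ V,
    (∀ v ∈ V, empLag r γ f α D D0 vw w ≤ empLag r γ f α D D0 v w) →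
      empLag r γ f α D D0 vw w ≤ empLag r γ f α D D0 vhat what

/-- Weight of a transition tuple `((s,a),s')` under `(s,a) ∼ d^D`, `s' ∼ P(·|s,a)`. -/
noncomputable def tupleWeight (P : S → A → S → ℝ) (dD : S → A → ℝ)
    (x : (S × A) × S) : ℝ :=
  dD x.1.1 x.1.2 * P x.1.1 x.1.2 x.2

/-- The joint law of the transition dataset `D` (i.i.d. from `d^D ⊗ P`) and the
initial-state dataset `D0` (i.i.d. from `μ0`). -/
noncomputable def dataMeasure [MeasurableSpace S] [MeasurableSpace A]
    (P : S → A → S → ℝ) (dD : S → A → ℝ) (μ0 : S → ℝ) (n n0 : ℕ) :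
    Measure ((Fin n → (S × A) × S) × (Fin n0 → S)) :=
  (Measure.pi fun _ : Fin n => discMeasure (tupleWeight P dD)).prod
    (Measure.pi fun _ : Fin n0 => discMeasure μ0)

/-- The joint law of datasets `D1`, `D2` (both i.i.d. from `d^D ⊗ P`) and `D0`
(i.i.d. from `μ0`), used by PRO-RL-BC. -/
noncomputable def dataMeasure3 [MeasurableSpace S] [MeasurableSpace A]
    (P : S → A → S → ℝ) (dD : S → A → ℝ) (μ0 : S → ℝ) (n1 n2 n0 : ℕ) :
    Measure ((Fin n1 → (S × A) × S) × (Fin n2 → (S × A) × S) × (Fin n0 → S)) :=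
  (Measure.pi fun _ : Fin n1 => discMeasure (tupleWeight P dD)).prod
    ((Measure.pi fun _ : Fin n2 => discMeasure (tupleWeight P dD)).prod
      (Measure.pi fun _ : Fin n0 => discMeasure μ0))

/-- `v` is the optimal value function: it satisfies the Bellman optimality equation. -/
def IsOptValue [Nonempty A] (P : S → A → S → ℝ) (r : S → A → ℝ) (γ : ℝ)
    (v : S → ℝ) : Prop :=
  ∀ s : S, v s = Finset.univ.sup' Finset.univ_nonempty
    (fun a : A => r s a + γ * ∑ s' : S, P s a s' * v s')

/-- Basic assumptions on the MDP, the regularizer-free data, and the data distribution. -/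
structure MDPAssumptions (P : S → A → S → ℝ) (r : S → A → ℝ) (μ0 : S → ℝ) (γ : ℝ)
    (dD : S → A → ℝ) : Prop where
  P_nonneg : ∀ s a s', 0 ≤ P s a s'
  P_sum : ∀ s a, ∑ s' : S, P s a s' = 1
  r_nonneg : ∀ s a, 0 ≤ r s a
  r_le_one : ∀ s a, r s a ≤ 1
  γ_nonneg : 0 ≤ γ
  γ_lt_one : γ < 1
  μ0_pos : ∀ s, 0 < μ0 s
  μ0_sum : ∑ s : S, μ0 s = 1
  dD_nonneg : ∀ s a, 0 ≤ dD s a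
  dD_sum : ∑ s : S, ∑ a : A, dD s a = 1

/-- Regularity of the regularizer `f`: continuously differentiable with derivative `f'`,
`M_f`-strongly convex, and with `|f'| ≤ Bf'`, `|f| ≤ Bf` on `[0, Bw]`. -/
structure RegAssumptions (f f' : ℝ → ℝ) (Mf Bw Bf' Bf : ℝ) : Prop where
  deriv : ∀ x, HasDerivAt f (f' x) x
  strong : StrongConvexOn Set.univ Mf f
  Mf_pos : 0 < Mf
  f'_bdd : ∀ x, 0 ≤ x → x ≤ Bw → |f' x| ≤ Bf'
  f_bdd : ∀ x, 0 ≤ x → x ≤ Bw → |f x| ≤ Bf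

/-- `w` is an optimal density ratio of the unregularized LP (the set `W*₀`). -/
def OptRatio (P : S → A → S → ℝ) (r : S → A → ℝ) (μ0 : S → ℝ) (γ : ℝ)
    (dD : S → A → ℝ) (w : S → A → ℝ) : Prop :=
  (∀ s a, 0 ≤ w s a) ∧ BellmanFlow P μ0 γ (dstar dD w) ∧
  ∀ w' : S → A → ℝ, (∀ s a, 0 ≤ w' s a) → BellmanFlow P μ0 γ (dstar dD w') →
    ∑ s : S, ∑ a : A, dstar dD w' s a * r s a
      ≤ ∑ s : S, ∑ a : A, dstar dD w s a * r s a

/-!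
At a saddle point `(v, w)` of the Lagrangian, minimality in `v` forces the Bellman flow equations on
`w · d^D`, so `w · d^D` is the occupancy of the policy extracted from `w` and its return is linear
in `w`. Strong convexity of `f` makes the Lagrangian grow quadratically in `w` around its maximizer,
so a candidate whose Lagrangian value is nearly optimal is close to `w` in `L²(d^D)`; the Bellman
flow turns this into closeness of the returns of the extracted policies, at the price of a factor
`2 / (1 - γ)`. A max-min point of the empirical Lagrangian is nearly optimal as soon as the latter
is uniformly accurate on `V × W`, which Hoeffding's inequality and a union bound guarantee with
probability at least `1 - δ`. Regularization costs a return of at most `2 α B_f = ε / 2`, which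
leaves `ε / 2` for the estimation error.
-/

section DiscountedMDP

/-- The transition and initial-state data of a discounted MDP. Unlike `MDPAssumptions`, this leaves
out the rewards and the data distribution and allows initial states of probability zero. -/
structure IsDiscountedMDP (P : S → A → S → ℝ) (μ0 : S → ℝ) (γ : ℝ) : Prop where
  transition_mem : ∀ s a, P s a ∈ stdSimplex ℝ S
  initial_mem : μ0 ∈ stdSimplex ℝ S
  γ_nonneg : 0 ≤ γ
  γ_lt_one : γ < 1

variable {P : S → A → S → ℝ} {r : S → A → ℝ} {μ0 : S → ℝ} {γ : ℝ} {dD : S → A → ℝ}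

lemma MDPAssumptions.isDiscountedMDP (h : MDPAssumptions P r μ0 γ dD) :
    IsDiscountedMDP P μ0 γ where
  transition_mem s a := ⟨h.P_nonneg s a, h.P_sum s a⟩
  initial_mem := ⟨fun s => (h.μ0_pos s).le, h.μ0_sum⟩
  γ_nonneg := h.γ_nonneg
  γ_lt_one := h.γ_lt_one

lemma MDPAssumptions.uncurry_mem_stdSimplex (h : MDPAssumptions P r μ0 γ dD) :
    Function.uncurry dD ∈ stdSimplex ℝ (S × A) :=
  ⟨fun x => h.dD_nonneg x.1 x.2, (Fintype.sum_prod_type _).trans h.dD_sum⟩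

end DiscountedMDP

section Simplex

variable {X Y : Type*} [Fintype X] [Fintype Y] {q : X → ℝ} {κ : X → Y → ℝ}

lemma mul_kernel_mem_stdSimplex (hq : q ∈ stdSimplex ℝ X) (hκ : ∀ x, κ x ∈ stdSimplex ℝ Y) :
    (fun z : X × Y => q z.1 * κ z.1 z.2) ∈ stdSimplex ℝ (X × Y) := by
  refine ⟨fun z => mul_nonneg (hq.1 _) ((hκ _).1 _), ?_⟩
  simp only [Fintype.sum_prod_type, ← Finset.mul_sum, (hκ _).2, mul_one, hq.2]

lemma sum_mul_kernel_mem_stdSimplex (hq : q ∈ stdSimplex ℝ X)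
    (hκ : ∀ x, κ x ∈ stdSimplex ℝ Y) : (fun y => ∑ x, q x * κ x y) ∈ stdSimplex ℝ Y := by
  refine ⟨fun y => Finset.sum_nonneg fun x _ => mul_nonneg (hq.1 x) ((hκ x).1 y), ?_⟩
  rw [Finset.sum_comm]
  simp only [← Finset.mul_sum, (hκ _).2, mul_one, hq.2]

end Simplex

section Policy

variable {S A : Type*} {d w dD π : S → A → ℝ}

lemma dstar_nonneg (hdD : ∀ s a, 0 ≤ dD s a) (hw : ∀ s a, 0 ≤ w s a) (s : S) (a : A) :
    0 ≤ dstar dD w s a :=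
  mul_nonneg (hw s a) (hdD s a)

variable [Fintype A]

lemma IsPolicy.abs_mul (hπ : IsPolicy π) (x : ℝ) (s : S) (a : A) :
    |x * π s a| = |x| * π s a := by
  rw [_root_.abs_mul, abs_of_nonneg (hπ.1 s a)]

lemma isPolicy_normPolicy [Nonempty A] (hd : ∀ s a, 0 ≤ d s a) : IsPolicy (normPolicy d) := by
  constructor
  · intro s a
    unfold normPolicy
    split_ifs with hmass
    · exact div_nonneg (hd s a) hmass.le
    · positivity
  · intro s
    by_cases hmass : 0 < ∑ a, d s a
    · simp only [normPolicy, if_pos hmass, ← Finset.sum_div, div_self hmass.ne']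
    · simp only [normPolicy, if_neg hmass, Finset.sum_const, Finset.card_univ, nsmul_eq_mul]
      exact mul_inv_cancel₀ (Nat.cast_ne_zero.2 Fintype.card_ne_zero)

lemma sum_mul_normPolicy (hd : ∀ s a, 0 ≤ d s a) (s : S) (a : A) :
    (∑ a', d s a') * normPolicy d s a = d s a := by
  by_cases hmass : 0 < ∑ a, d s a
  · rw [normPolicy, if_pos hmass, mul_div_cancel₀ _ hmass.ne']
  · have hzero : ∑ a, d s a = 0 :=
      (not_lt.1 hmass).antisymm (Finset.sum_nonneg fun a _ => hd s a)
    rw [hzero, zero_mul,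
      (Finset.sum_eq_zero_iff_of_nonneg fun a _ => hd s a).1 hzero a (Finset.mem_univ a)]

lemma extractPolicy_eq_normPolicy (piD w : S → A → ℝ) :
    extractPolicy piD w = normPolicy (dstar piD w) := rfl

lemma isPolicy_extractPolicy [Nonempty A] (hdD : ∀ s a, 0 ≤ dD s a) (hw : ∀ s a, 0 ≤ w s a) :
    IsPolicy (extractPolicy (behPolicy dD) w) :=
  isPolicy_normPolicy (dstar_nonneg (isPolicy_normPolicy hdD).1 hw)

lemma sum_dstar_mul_extractPolicy [Nonempty A] (hdD : ∀ s a, 0 ≤ dD s a)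
    (hw : ∀ s a, 0 ≤ w s a) (s : S) (a : A) :
    (∑ a', dstar dD w s a') * extractPolicy (behPolicy dD) w s a = dstar dD w s a := by
  have hdstar (a : A) : dstar dD w s a = (∑ a', dD s a') * dstar (behPolicy dD) w s a := by
    rw [dstar, ← sum_mul_normPolicy hdD s a, dstar, behPolicy, mul_left_comm]
  simp only [hdstar, ← Finset.mul_sum, mul_assoc, extractPolicy_eq_normPolicy]
  rw [behPolicy, sum_mul_normPolicy (dstar_nonneg (isPolicy_normPolicy hdD).1 hw)]

end Policy

section Occupancy

variable {P : S → A → S → ℝ} {r : S → A → ℝ} {μ0 : S → ℝ} {γ : ℝ} {π d e : S → A → ℝ}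

lemma uncurry_saDist_mem_stdSimplex (hP : ∀ s a, P s a ∈ stdSimplex ℝ S)
    (hμ : μ0 ∈ stdSimplex ℝ S) (hπ : IsPolicy π) (t : ℕ) :
    Function.uncurry (saDist P μ0 π t) ∈ stdSimplex ℝ (S × A) := by
  have hπ' (s : S) : π s ∈ stdSimplex ℝ A := ⟨hπ.1 s, hπ.2 s⟩
  induction t with
  | zero => exact mul_kernel_mem_stdSimplex hμ hπ'
  | succ t ih =>
    have hnext := sum_mul_kernel_mem_stdSimplex ih fun x : S × A => hP x.1 x.2
    simp only [Fintype.sum_prod_type, Function.uncurry_apply_pair] at hnext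
    exact mul_kernel_mem_stdSimplex hnext hπ'

lemma hasSum_occ (hM : IsDiscountedMDP P μ0 γ) (hπ : IsPolicy π) (s : S) (a : A) :
    HasSum (fun t : ℕ => (1 - γ) * (γ ^ t * saDist P μ0 π t s a)) (occ P μ0 γ π s a) := by
  have hIcc (t : ℕ) : saDist P μ0 π t s a ∈ Set.Icc 0 1 :=
    mem_Icc_of_mem_stdSimplex
      (uncurry_saDist_mem_stdSimplex hM.transition_mem hM.initial_mem hπ t) (s, a)
  have hsummable : Summable fun t : ℕ => γ ^ t * saDist P μ0 π t s a :=
    (summable_geometric_of_lt_one hM.γ_nonneg hM.γ_lt_one).of_nonneg_of_le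
      (fun t => mul_nonneg (pow_nonneg hM.γ_nonneg t) (hIcc t).1)
      fun t => mul_le_of_le_one_right (pow_nonneg hM.γ_nonneg t) (hIcc t).2
  exact hsummable.hasSum.mul_left _

lemma occ_eq_flow_mul_policy (hM : IsDiscountedMDP P μ0 γ) (hπ : IsPolicy π) (s : S) (a : A) :
    occ P μ0 γ π s a = ((1 - γ) * μ0 s
      + γ * ∑ s' : S, ∑ a' : A, P s' a' s * occ P μ0 γ π s' a') * π s a := by
  have hocc := hasSum_occ hM hπ
  have hshift : HasSum (fun t : ℕ => (1 - γ) * (γ ^ (t + 1) * saDist P μ0 π (t + 1) s a))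
      (γ * (∑ s' : S, ∑ a' : A, P s' a' s * occ P μ0 γ π s' a') * π s a) := by
    refine (((hasSum_sum fun s' _ => hasSum_sum fun a' _ =>
      (hocc s' a').mul_left (P s' a' s)).mul_left γ).mul_right (π s a)).congr_fun fun t => ?_
    simp only [saDist, pow_succ, Finset.mul_sum, Finset.sum_mul]
    exact Finset.sum_congr rfl fun s' _ => Finset.sum_congr rfl fun a' _ => by ring
  rw [(hocc s a).unique hshift.zero_add, saDist]
  ring

lemma bellmanFlow_occ (hM : IsDiscountedMDP P μ0 γ) (hπ : IsPolicy π) :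
    BellmanFlow P μ0 γ (occ P μ0 γ π) := by
  intro s
  rw [Finset.sum_congr rfl fun a _ => occ_eq_flow_mul_policy hM hπ s a,
    ← Finset.mul_sum, hπ.2, mul_one]

lemma sum_occ_mul_policy (hM : IsDiscountedMDP P μ0 γ) (hπ : IsPolicy π) (s : S) (a : A) :
    (∑ a' : A, occ P μ0 γ π s a') * π s a = occ P μ0 γ π s a := by
  rw [bellmanFlow_occ hM hπ s, ← occ_eq_flow_mul_policy hM hπ]

lemma sum_mul_sum_transition (P : S → A → S → ℝ) (v : S → ℝ) (d : S → A → ℝ) :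
    ∑ s, v s * ∑ s', ∑ a', P s' a' s * d s' a'
      = ∑ s, ∑ a, d s a * ∑ s', P s a s' * v s' := by
  simp only [Finset.mul_sum]
  rw [Finset.sum_comm]
  refine Finset.sum_congr rfl fun s _ => ?_
  rw [Finset.sum_comm]
  exact Finset.sum_congr rfl fun a _ => Finset.sum_congr rfl fun s' _ => by ring

lemma BellmanFlow.sum_abs_marginal_sub_le (hP : ∀ s a, P s a ∈ stdSimplex ℝ S) (hγ0 : 0 ≤ γ)
    (hd : BellmanFlow P μ0 γ d) (he : BellmanFlow P μ0 γ e) :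
    ∑ s, |∑ a, d s a - ∑ a, e s a| ≤ γ * ∑ s, ∑ a, |d s a - e s a| := by
  have hstate (s : S) : |∑ a, d s a - ∑ a, e s a|
      ≤ γ * ∑ s', ∑ a', P s' a' s * |d s' a' - e s' a'| := by
    have hdiff : ∑ a, d s a - ∑ a, e s a
        = γ * ∑ s', ∑ a', P s' a' s * (d s' a' - e s' a') := by
      rw [hd s, he s, add_sub_add_left_eq_sub, ← mul_sub]
      simp only [mul_sub, Finset.sum_sub_distrib]
    rw [hdiff, abs_mul, abs_of_nonneg hγ0]
    gcongr
    refine (Finset.abs_sum_le_sum_abs _ _).trans (Finset.sum_le_sum fun s' _ => ?_)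
    refine (Finset.abs_sum_le_sum_abs _ _).trans_eq (Finset.sum_congr rfl fun a' _ => ?_)
    rw [abs_mul, abs_of_nonneg ((hP s' a').1 s)]
  calc ∑ s, |∑ a, d s a - ∑ a, e s a|
      ≤ γ * ∑ s, ∑ s', ∑ a', P s' a' s * |d s' a' - e s' a'| := by
        rw [Finset.mul_sum]
        exact Finset.sum_le_sum fun s _ => hstate s
    _ = γ * ∑ s, ∑ a, |d s a - e s a| := by
        simpa only [one_mul, mul_one, (hP _ _).2] using congrArg (γ * ·)
          (sum_mul_sum_transition P (fun _ => 1) fun s a => |d s a - e s a|)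

lemma BellmanFlow.sum_abs_sub_occ_le (hM : IsDiscountedMDP P μ0 γ) (hd : BellmanFlow P μ0 γ d)
    (hπ : IsPolicy π) :
    (1 - γ) * ∑ s, ∑ a, |d s a - occ P μ0 γ π s a|
      ≤ ∑ s, ∑ a, |d s a - (∑ a', d s a') * π s a| := by
  set m : S → ℝ := fun s => ∑ a, d s a - ∑ a, occ P μ0 γ π s a with hm
  have hmarginal : ∑ s, |m s| ≤ γ * ∑ s, ∑ a, |d s a - occ P μ0 γ π s a| :=
    hd.sum_abs_marginal_sub_le hM.transition_mem hM.γ_nonneg (bellmanFlow_occ hM hπ)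
  have htriangle : ∑ s, ∑ a, |d s a - occ P μ0 γ π s a|
      ≤ ∑ s, ∑ a, |d s a - (∑ a', d s a') * π s a| + ∑ s, |m s| := by
    calc ∑ s, ∑ a, |d s a - occ P μ0 γ π s a|
        ≤ ∑ s, ∑ a, (|d s a - (∑ a', d s a') * π s a| + |m s| * π s a) := by
          gcongr with s _ a _
          have hsplit : d s a - occ P μ0 γ π s a
              = (d s a - (∑ a', d s a') * π s a) + m s * π s a := by
            rw [hm, ← sum_occ_mul_policy hM hπ s a]
            ring
          rw [hsplit, ← hπ.abs_mul]
          exact abs_add_le _ _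
      _ = _ := by simp only [Finset.sum_add_distrib, ← Finset.mul_sum, hπ.2, mul_one]
  linarith

lemma BellmanFlow.eq_occ (hM : IsDiscountedMDP P μ0 γ) (hd : BellmanFlow P μ0 γ d)
    (hπ : IsPolicy π) (hdπ : ∀ s a, (∑ a', d s a') * π s a = d s a) : d = occ P μ0 γ π := by
  have hle := hd.sum_abs_sub_occ_le hM hπ
  simp only [hdπ, sub_self, abs_zero, Finset.sum_const_zero] at hle
  have hsum := nonpos_of_mul_nonpos_right hle (sub_pos.2 hM.γ_lt_one)
  have hnonneg (s : S) : 0 ≤ ∑ a, |d s a - occ P μ0 γ π s a| :=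
    Finset.sum_nonneg fun a _ => abs_nonneg _
  ext s a
  have hs := (Finset.single_le_sum (fun s _ => hnonneg s) (Finset.mem_univ s)).trans hsum
  exact sub_eq_zero.1 (abs_nonpos_iff.1
    ((Finset.single_le_sum (fun a _ => abs_nonneg _) (Finset.mem_univ a)).trans hs))

lemma sum_abs_sub_marginal_mul_policy_le (hπ : IsPolicy π)
    (heπ : ∀ s a, (∑ a', e s a') * π s a = e s a) (d : S → A → ℝ) :
    ∑ s, ∑ a, |d s a - (∑ a', d s a') * π s a| ≤ 2 * ∑ s, ∑ a, |d s a - e s a| := by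
  rw [Finset.mul_sum]
  gcongr with s
  have hmass : |∑ a, e s a - ∑ a, d s a| ≤ ∑ a, |d s a - e s a| := by
    rw [abs_sub_comm, ← Finset.sum_sub_distrib]
    exact Finset.abs_sum_le_sum_abs _ _
  calc ∑ a, |d s a - (∑ a', d s a') * π s a|
      ≤ ∑ a, (|d s a - e s a| + |∑ a, e s a - ∑ a, d s a| * π s a) := by
        gcongr with a
        rw [← hπ.abs_mul, sub_mul, heπ]
        exact abs_sub_le _ _ _
    _ ≤ 2 * ∑ a, |d s a - e s a| := by
        rw [Finset.sum_add_distrib, ← Finset.mul_sum, hπ.2]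
        linarith

lemma BellmanFlow.sum_mul_sub_Jret_le (hM : IsDiscountedMDP P μ0 γ)
    (hr : ∀ s a, r s a ∈ Set.Icc 0 1) (hd : BellmanFlow P μ0 γ d) (hπ : IsPolicy π)
    (heπ : ∀ s a, (∑ a', e s a') * π s a = e s a) :
    (1 - γ) * (∑ s, ∑ a, d s a * r s a - Jret P r μ0 γ π)
      ≤ 2 * ∑ s, ∑ a, |d s a - e s a| := by
  have hreward : ∑ s, ∑ a, d s a * r s a - Jret P r μ0 γ π
      ≤ ∑ s, ∑ a, |d s a - occ P μ0 γ π s a| := by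
    simp only [Jret, ← Finset.sum_sub_distrib, ← sub_mul]
    gcongr with s _ a _
    exact (mul_le_mul_of_nonneg_right (le_abs_self _) (hr s a).1).trans
      (mul_le_of_le_one_right (abs_nonneg _) (hr s a).2)
  calc (1 - γ) * (∑ s, ∑ a, d s a * r s a - Jret P r μ0 γ π)
      ≤ (1 - γ) * ∑ s, ∑ a, |d s a - occ P μ0 γ π s a| :=
        mul_le_mul_of_nonneg_left hreward (sub_nonneg.2 hM.γ_lt_one.le)
    _ ≤ ∑ s, ∑ a, |d s a - (∑ a', d s a') * π s a| := hd.sum_abs_sub_occ_le hM hπ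
    _ ≤ 2 * ∑ s, ∑ a, |d s a - e s a| := sum_abs_sub_marginal_mul_policy_le hπ heπ d

end Occupancy

section Extraction

variable {P : S → A → S → ℝ} {r : S → A → ℝ} {μ0 : S → ℝ} {γ : ℝ} {dD w w' : S → A → ℝ}

lemma BellmanFlow.Jret_extractPolicy [Nonempty A] (hM : IsDiscountedMDP P μ0 γ)
    (hdD : ∀ s a, 0 ≤ dD s a) (hw : ∀ s a, 0 ≤ w s a)
    (hflow : BellmanFlow P μ0 γ (dstar dD w)) (r : S → A → ℝ) :
    Jret P r μ0 γ (extractPolicy (behPolicy dD) w) = ∑ s, ∑ a, dstar dD w s a * r s a := by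
  rw [Jret, ← hflow.eq_occ hM (isPolicy_extractPolicy hdD hw) (sum_dstar_mul_extractPolicy hdD hw)]

lemma sum_mul_abs_le_l2nrm (hdD : Function.uncurry dD ∈ stdSimplex ℝ (S × A)) (g : S → A → ℝ) :
    ∑ s, ∑ a, dD s a * |g s a| ≤ l2nrm dD g := by
  have hjensen := Real.pow_arith_mean_le_arith_mean_pow Finset.univ (Function.uncurry dD)
    (fun x => |g x.1 x.2|) (fun x _ => hdD.1 x) hdD.2 (fun x _ => abs_nonneg _) 2
  simp only [sq_abs, Fintype.sum_prod_type, Function.uncurry_apply_pair] at hjensen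
  exact Real.le_sqrt_of_sq_le hjensen

lemma BellmanFlow.Jret_extractPolicy_sub_le [Nonempty A] (hM : IsDiscountedMDP P μ0 γ)
    (hr : ∀ s a, r s a ∈ Set.Icc 0 1) (hdD : Function.uncurry dD ∈ stdSimplex ℝ (S × A))
    (hw : ∀ s a, 0 ≤ w s a) (hw' : ∀ s a, 0 ≤ w' s a)
    (hflow : BellmanFlow P μ0 γ (dstar dD w)) :
    (1 - γ) * (Jret P r μ0 γ (extractPolicy (behPolicy dD) w)
        - Jret P r μ0 γ (extractPolicy (behPolicy dD) w'))
      ≤ 2 * l2nrm dD (w - w') := by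
  have hdD0 (s : S) (a : A) : 0 ≤ dD s a := hdD.1 (s, a)
  rw [hflow.Jret_extractPolicy hM hdD0 hw]
  refine (hflow.sum_mul_sub_Jret_le hM hr (isPolicy_extractPolicy hdD0 hw')
    (sum_dstar_mul_extractPolicy hdD0 hw')).trans ?_
  refine mul_le_mul_of_nonneg_left (le_of_eq_of_le ?_ (sum_mul_abs_le_l2nrm hdD _)) zero_le_two
  refine Finset.sum_congr rfl fun s _ => Finset.sum_congr rfl fun a _ => ?_
  rw [dstar, dstar, ← sub_mul, abs_mul, abs_of_nonneg (hdD0 s a), mul_comm, Pi.sub_apply,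
    Pi.sub_apply]

end Extraction

section Lagrangian

variable {P : S → A → S → ℝ} {r : S → A → ℝ} {μ0 : S → ℝ} {γ : ℝ} {dD w w' w0 : S → A → ℝ}
  {f : ℝ → ℝ} {α Bw Bf Mf κ : ℝ} {v : S → ℝ}

/-- The violation of the Bellman flow equations by `d`: inflow minus outflow at each state. -/
noncomputable def flowResidual (P : S → A → S → ℝ) (μ0 : S → ℝ) (γ : ℝ) (d : S → A → ℝ)
    (s : S) : ℝ :=
  (1 - γ) * μ0 s + γ * (∑ s', ∑ a', P s' a' s * d s' a') - ∑ a, d s a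

lemma bellmanFlow_iff_flowResidual_eq_zero {d : S → A → ℝ} :
    BellmanFlow P μ0 γ d ↔ ∀ s, flowResidual P μ0 γ d s = 0 :=
  forall_congr' fun _ => by rw [flowResidual, sub_eq_zero, eq_comm]

lemma Lag_eq_add_flowResidual (v : S → ℝ) (w : S → A → ℝ) :
    Lag P r μ0 γ dD f α v w
      = ∑ s, ∑ a, dstar dD w s a * r s a - α * ∑ s, ∑ a, dD s a * f (w s a)
        + ∑ s, v s * flowResidual P μ0 γ (dstar dD w) s := by
  have hbellman : ∑ s, ∑ a, dD s a * (w s a * eV P r γ v s a)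
      = ∑ s, ∑ a, dstar dD w s a * r s a
        + γ * ∑ s, v s * ∑ s', ∑ a', P s' a' s * dstar dD w s' a'
        - ∑ s, v s * ∑ a, dstar dD w s a := by
    rw [sum_mul_sum_transition]
    simp only [Finset.mul_sum _ _ γ, Finset.mul_sum _ _ (v _), ← Finset.sum_add_distrib,
      ← Finset.sum_sub_distrib]
    refine Finset.sum_congr rfl fun s _ => Finset.sum_congr rfl fun a _ => ?_
    rw [eV, dstar]
    ring
  have hresidual : ∑ s, v s * flowResidual P μ0 γ (dstar dD w) s
      = (1 - γ) * ∑ s, μ0 s * v s + γ * ∑ s, v s * ∑ s', ∑ a', P s' a' s * dstar dD w s' a'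
        - ∑ s, v s * ∑ a, dstar dD w s a := by
    rw [Finset.mul_sum (a := 1 - γ), Finset.mul_sum (a := γ), ← Finset.sum_add_distrib,
      ← Finset.sum_sub_distrib]
    refine Finset.sum_congr rfl fun s _ => ?_
    rw [flowResidual]
    ring
  rw [Lag, hbellman, hresidual]
  ring

lemma BellmanFlow.Lag_eq (hflow : BellmanFlow P μ0 γ (dstar dD w)) (v : S → ℝ) :
    Lag P r μ0 γ dD f α v w
      = ∑ s, ∑ a, dstar dD w s a * r s a - α * ∑ s, ∑ a, dD s a * f (w s a) := by
  simp only [Lag_eq_add_flowResidual, bellmanFlow_iff_flowResidual_eq_zero.1 hflow, mul_zero,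
    Finset.sum_const_zero, add_zero]

lemma bellmanFlow_of_forall_Lag_le
    (hmin : ∀ v', Lag P r μ0 γ dD f α v w ≤ Lag P r μ0 γ dD f α v' w) :
    BellmanFlow P μ0 γ (dstar dD w) := by
  set ρ := flowResidual P μ0 γ (dstar dD w) with hρ
  have hle := hmin (v - ρ)
  simp only [Lag_eq_add_flowResidual, ← hρ, Pi.sub_apply, sub_mul,
    Finset.sum_sub_distrib] at hle
  have hzero : ∑ s, ρ s * ρ s = 0 :=
    le_antisymm (by linarith) (Finset.sum_nonneg fun s _ => mul_self_nonneg _)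
  rw [Finset.sum_eq_zero_iff_of_nonneg fun s _ => mul_self_nonneg _] at hzero
  exact bellmanFlow_iff_flowResidual_eq_zero.2
    fun s => mul_self_eq_zero.1 (hzero s (Finset.mem_univ s))

lemma strongConvexOn_midpoint_le {s : Set ℝ} {m x y : ℝ} (hf : StrongConvexOn s m f)
    (hx : x ∈ s) (hy : y ∈ s) :
    f (2⁻¹ * x + 2⁻¹ * y) ≤ 2⁻¹ * f x + 2⁻¹ * f y - m / 8 * (x - y) ^ 2 := by
  have hle := hf.2 hx hy (by norm_num : (0 : ℝ) ≤ 2⁻¹) (by norm_num : (0 : ℝ) ≤ 2⁻¹) (by norm_num)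
  simp only [smul_eq_mul, Real.norm_eq_abs, sq_abs] at hle
  linarith

lemma l2nrm_sq (hdD : ∀ s a, 0 ≤ dD s a) (g : S → A → ℝ) :
    l2nrm dD g ^ 2 = ∑ s, ∑ a, dD s a * g s a ^ 2 :=
  Real.sq_sqrt (Finset.sum_nonneg fun s _ => Finset.sum_nonneg fun a _ =>
    mul_nonneg (hdD s a) (sq_nonneg _))

lemma Lag_midpoint_ge (hdD : ∀ s a, 0 ≤ dD s a) (hf : StrongConvexOn (Set.Icc 0 Bw) Mf f)
    (hα : 0 ≤ α) (hw : ∀ s a, w s a ∈ Set.Icc 0 Bw) (hw' : ∀ s a, w' s a ∈ Set.Icc 0 Bw)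
    (v : S → ℝ) :
    2⁻¹ * Lag P r μ0 γ dD f α v w + 2⁻¹ * Lag P r μ0 γ dD f α v w'
        + α * Mf / 8 * l2nrm dD (w - w') ^ 2
      ≤ Lag P r μ0 γ dD f α v ((2⁻¹ : ℝ) • w + (2⁻¹ : ℝ) • w') := by
  have hregularizer : ∑ s, ∑ a, dD s a * f (2⁻¹ * w s a + 2⁻¹ * w' s a)
      ≤ 2⁻¹ * ∑ s, ∑ a, dD s a * f (w s a) + 2⁻¹ * ∑ s, ∑ a, dD s a * f (w' s a)
        - Mf / 8 * l2nrm dD (w - w') ^ 2 := by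
    simp only [l2nrm_sq hdD, Finset.mul_sum, ← Finset.sum_add_distrib, ← Finset.sum_sub_distrib]
    gcongr with s _ a _
    refine (mul_le_mul_of_nonneg_left (strongConvexOn_midpoint_le hf (hw s a) (hw' s a))
      (hdD s a)).trans_eq ?_
    simp only [Pi.sub_apply]
    ring
  have hlinear : ∑ s, ∑ a, dD s a * ((2⁻¹ * w s a + 2⁻¹ * w' s a) * eV P r γ v s a)
      = 2⁻¹ * ∑ s, ∑ a, dD s a * (w s a * eV P r γ v s a)
        + 2⁻¹ * ∑ s, ∑ a, dD s a * (w' s a * eV P r γ v s a) := by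
    simp only [Finset.mul_sum, ← Finset.sum_add_distrib]
    exact Finset.sum_congr rfl fun s _ => Finset.sum_congr rfl fun a _ => by ring
  have hscaled := mul_le_mul_of_nonneg_left hregularizer hα
  simp only [Lag, Pi.add_apply, Pi.smul_apply, smul_eq_mul, hlinear]
  linarith

lemma IsSaddleB.quadratic_growth (hdD : ∀ s a, 0 ≤ dD s a)
    (hf : StrongConvexOn (Set.Icc 0 Bw) Mf f) (hα : 0 ≤ α)
    (hsad : IsSaddleB P r μ0 γ dD f α Bw v w) (hw' : ∀ s a, w' s a ∈ Set.Icc 0 Bw) :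
    α * Mf / 4 * l2nrm dD (w - w') ^ 2
      ≤ Lag P r μ0 γ dD f α v w - Lag P r μ0 γ dD f α v w' := by
  have hmidpoint := Lag_midpoint_ge (P := P) (r := r) (μ0 := μ0) (γ := γ) hdD hf hα hsad.1 hw' v
  have hmax := hsad.2.2 ((2⁻¹ : ℝ) • w + (2⁻¹ : ℝ) • w') fun s a =>
    (convex_Icc 0 Bw) (hsad.1 s a) (hw' s a) (inv_nonneg.2 zero_le_two)
      (inv_nonneg.2 zero_le_two) (by norm_num : (2⁻¹ : ℝ) + 2⁻¹ = 1)
  linarith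

lemma abs_sum_mul_comp_le (hdD : Function.uncurry dD ∈ stdSimplex ℝ (S × A))
    (hf : ∀ x ∈ Set.Icc 0 Bw, |f x| ≤ Bf) (hw : ∀ s a, w s a ∈ Set.Icc 0 Bw) :
    |∑ s, ∑ a, dD s a * f (w s a)| ≤ Bf := by
  have hmem := (convex_Icc (-Bf) Bf).sum_mem (t := Finset.univ) (fun x _ => hdD.1 x) hdD.2
    fun x _ => abs_le.1 (hf _ (hw x.1 x.2))
  simpa only [Fintype.sum_prod_type, Function.uncurry_apply_pair, smul_eq_mul, Set.mem_Icc,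
    ← abs_le] using hmem

lemma IsSaddleB.Jret_extractPolicy_sub_le [Nonempty A] (hM : IsDiscountedMDP P μ0 γ)
    (hdD : Function.uncurry dD ∈ stdSimplex ℝ (S × A)) (hf : ∀ x ∈ Set.Icc 0 Bw, |f x| ≤ Bf)
    (hα : 0 ≤ α) (hsad : IsSaddleB P r μ0 γ dD f α Bw v w)
    (hw0 : ∀ s a, w0 s a ∈ Set.Icc 0 Bw) (hflow0 : BellmanFlow P μ0 γ (dstar dD w0)) :
    Jret P r μ0 γ (extractPolicy (behPolicy dD) w0)
      - Jret P r μ0 γ (extractPolicy (behPolicy dD) w) ≤ 2 * (α * Bf) := by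
  have hdD0 (s : S) (a : A) : 0 ≤ dD s a := hdD.1 (s, a)
  have hflow := bellmanFlow_of_forall_Lag_le hsad.2.1
  rw [hflow0.Jret_extractPolicy hM hdD0 fun s a => (hw0 s a).1,
    hflow.Jret_extractPolicy hM hdD0 fun s a => (hsad.1 s a).1]
  have hmax := hsad.2.2 w0 hw0
  rw [hflow0.Lag_eq, hflow.Lag_eq] at hmax
  have hbound0 := mul_le_mul_of_nonneg_left (abs_le.1 (abs_sum_mul_comp_le hdD hf hw0)).2 hα
  have hbound := mul_le_mul_of_nonneg_left (abs_le.1 (abs_sum_mul_comp_le hdD hf hsad.1)).1 hα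
  linarith

lemma IsSaddleB.Jret_extractPolicy_sub_le_of_Lag_sub_le [Nonempty A]
    (hM : IsDiscountedMDP P μ0 γ) (hr : ∀ s a, r s a ∈ Set.Icc 0 1)
    (hdD : Function.uncurry dD ∈ stdSimplex ℝ (S × A))
    (hf : StrongConvexOn (Set.Icc 0 Bw) Mf f) (hα : 0 < α) (hMf : 0 < Mf) (hκ : 0 ≤ κ)
    (hsad : IsSaddleB P r μ0 γ dD f α Bw v w) (hw' : ∀ s a, w' s a ∈ Set.Icc 0 Bw)
    (hgap : Lag P r μ0 γ dD f α v w - Lag P r μ0 γ dD f α v w'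
      ≤ α * Mf / 4 * ((1 - γ) * κ / 2) ^ 2) :
    Jret P r μ0 γ (extractPolicy (behPolicy dD) w)
      - Jret P r μ0 γ (extractPolicy (behPolicy dD) w') ≤ κ := by
  have hγ : 0 < 1 - γ := sub_pos.2 hM.γ_lt_one
  have hgrowth := (hsad.quadratic_growth (fun s a => hdD.1 (s, a)) hf hα.le hw').trans hgap
  have hnorm : l2nrm dD (w - w') ≤ (1 - γ) * κ / 2 :=
    le_of_abs_le (abs_le_of_sq_le_sq
      (le_of_mul_le_mul_left hgrowth (by positivity)) (by positivity))
  have hreturn := (bellmanFlow_of_forall_Lag_le hsad.2.1).Jret_extractPolicy_sub_le hM hr hdD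
    (fun s a => (hsad.1 s a).1) fun s a => (hw' s a).1
  refine le_of_mul_le_mul_left (hreturn.trans ?_) hγ
  linarith

end Lagrangian

section Concentration

lemma one_sub_add_le_measure_prod {Ω Ω' : Type*} [MeasurableSpace Ω] [MeasurableSpace Ω']
    {μ : Measure Ω} {ν : Measure Ω'} [IsProbabilityMeasure μ] [IsProbabilityMeasure ν]
    {B : Set Ω} {B' : Set Ω'} {a b : ℝ≥0∞} (hB : μ B ≤ a) (hB' : ν B' ≤ b) :
    1 - (a + b) ≤ (μ.prod ν) {ω | ω.1 ∉ B ∧ ω.2 ∉ B'} := by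
  rw [tsub_le_iff_right]
  have hcover : Set.univ
      ⊆ {ω : Ω × Ω' | ω.1 ∉ B ∧ ω.2 ∉ B'} ∪ (B ×ˢ Set.univ ∪ Set.univ ×ˢ B') := by
    intro ω _
    by_cases h : ω.1 ∈ B <;> by_cases h' : ω.2 ∈ B' <;> simp [h, h']
  calc 1 = (μ.prod ν) Set.univ := measure_univ.symm
    _ ≤ (μ.prod ν) {ω | ω.1 ∉ B ∧ ω.2 ∉ B'}
          + ((μ.prod ν) (B ×ˢ Set.univ) + (μ.prod ν) (Set.univ ×ˢ B')) :=
      (measure_mono hcover).trans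
        ((measure_union_le _ _).trans (add_le_add_right (measure_union_le _ _) _))
    _ ≤ (μ.prod ν) {ω | ω.1 ∉ B ∧ ω.2 ∉ B'} + (a + b) := by
      rw [Measure.prod_prod, Measure.prod_prod, measure_univ, measure_univ, mul_one, one_mul]
      gcongr

/-- The empirical mean of `g` over the dataset `D`. -/
noncomputable def empMean {X : Type*} {n : ℕ} (D : Fin n → X) (g : X → ℝ) : ℝ :=
  (n : ℝ)⁻¹ * ∑ i, g (D i)

lemma empMean_sub_eq {X : Type*} {n : ℕ} (hn : 0 < n) (D : Fin n → X) (g : X → ℝ) (m : ℝ) :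
    empMean D g - m = (n : ℝ)⁻¹ * ∑ i, (g (D i) - m) := by
  have hn' : (n : ℝ) ≠ 0 := Nat.cast_ne_zero.2 hn.ne'
  rw [empMean, Finset.sum_sub_distrib, Finset.sum_const, Finset.card_univ, Fintype.card_fin,
    nsmul_eq_mul, mul_sub, inv_mul_cancel_left₀ hn']

variable {K t δ : ℝ} {n : ℕ}

lemma exp_neg_sq_radius_le {N : ℝ} (hK : 0 < K) (hδ : 0 < δ) (hN : 0 < N) (hn : 0 < n) :
    Real.exp (-(n * (K * √(2 * Real.log (4 * N / δ) / n))) ^ 2 / (2 * (n * K ^ 2)))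
      ≤ δ / (4 * N) := by
  set L := Real.log (4 * N / δ)
  have hradius : L ≤ (n * (K * √(2 * L / n))) ^ 2 / (2 * (n * K ^ 2)) := by
    rw [mul_pow, mul_pow, Real.sq_sqrt', le_div_iff₀ (by positivity)]
    calc L * (2 * (n * K ^ 2)) = n ^ 2 * (K ^ 2 * (2 * L / n)) := by field_simp
      _ ≤ n ^ 2 * (K ^ 2 * max (2 * L / n) 0) := by
        gcongr
        exact le_max_left _ _
  calc Real.exp (-(n * (K * √(2 * L / n))) ^ 2 / (2 * (n * K ^ 2))) ≤ Real.exp (-L) := by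
        rwa [Real.exp_le_exp, neg_div, neg_le_neg_iff]
    _ = δ / (4 * N) := by rw [Real.exp_neg, Real.exp_log (by positivity), inv_div]

variable {X : Type*} [Fintype X] [MeasurableSpace X] {p g : X → ℝ}

lemma isProbabilityMeasure_discMeasure (hp : p ∈ stdSimplex ℝ X) :
    IsProbabilityMeasure (discMeasure p) := by
  constructor
  rw [discMeasure, Measure.sum_apply _ MeasurableSet.univ, tsum_fintype]
  simp only [Measure.smul_apply, measure_univ, smul_eq_mul, mul_one,
    ← ENNReal.ofReal_sum_of_nonneg fun x _ => hp.1 x, hp.2, ENNReal.ofReal_one]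

variable [MeasurableSingletonClass X]

lemma integral_discMeasure (hp : ∀ x, 0 ≤ p x) (g : X → ℝ) :
    ∫ x, g x ∂discMeasure p = ∑ x, p x * g x := by
  rw [discMeasure, Measure.sum_fintype, integral_finsetSum_measure]
  · simp only [integral_smul_measure, integral_dirac, ENNReal.toReal_ofReal (hp _), smul_eq_mul]
  · exact fun x _ => (integrable_dirac (enorm_lt_top)).smul_measure ENNReal.ofReal_ne_top

lemma hasSubgaussianMGF_sub_mean (hp : p ∈ stdSimplex ℝ X) (hg : ∀ x, |g x| ≤ K) :
    ProbabilityTheory.HasSubgaussianMGF (fun x => g x - ∑ y, p y * g y) (‖K‖₊ ^ 2)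
      (discMeasure p) := by
  have := isProbabilityMeasure_discMeasure hp
  have hsub := ProbabilityTheory.hasSubgaussianMGF_of_mem_Icc (μ := discMeasure p)
    (measurable_of_finite g).aemeasurable (.of_forall fun x => abs_le.1 (hg x))
  have hwidth : ‖K - -K‖₊ / 2 = ‖K‖₊ := by
    rw [sub_neg_eq_add, ← two_mul, nnnorm_mul, Real.nnnorm_ofNat,
      mul_div_cancel_left₀ _ two_ne_zero]
  rwa [integral_discMeasure hp.1, hwidth] at hsub

lemma measureReal_le_sum_sub_mean_le (hp : p ∈ stdSimplex ℝ X) (hg : ∀ x, |g x| ≤ K)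
    (ht : 0 ≤ t) (n : ℕ) :
    (Measure.pi fun _ : Fin n => discMeasure p).real {D | t ≤ ∑ i, (g (D i) - ∑ x, p x * g x)}
      ≤ Real.exp (-t ^ 2 / (2 * (n * K ^ 2))) := by
  have := isProbabilityMeasure_discMeasure hp
  have hindep := ProbabilityTheory.iIndepFun_pi (μ := fun _ : Fin n => discMeasure p)
    (X := fun _ x => g x - ∑ y, p y * g y) fun _ => (measurable_of_finite _).aemeasurable
  have hsub (i : Fin n) : ProbabilityTheory.HasSubgaussianMGF
      (fun D : Fin n → X => g (D i) - ∑ x, p x * g x) (‖K‖₊ ^ 2)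
      (Measure.pi fun _ : Fin n => discMeasure p) := by
    have heval := measurePreserving_eval (fun _ : Fin n => discMeasure p) i
    have hi := hasSubgaussianMGF_sub_mean hp hg
    rw [← heval.map_eq] at hi
    exact .of_map heval.measurable.aemeasurable hi
  have htail := ProbabilityTheory.HasSubgaussianMGF.measure_sum_ge_le_of_iIndepFun hindep
    (s := Finset.univ) (fun i _ => hsub i) ht
  simpa only [Finset.sum_const, Finset.card_univ, Fintype.card_fin, nsmul_eq_mul, NNReal.coe_mul,
    NNReal.coe_natCast, NNReal.coe_pow, coe_nnnorm, Real.norm_eq_abs, sq_abs] using htail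

lemma measureReal_le_abs_sum_sub_mean_le (hp : p ∈ stdSimplex ℝ X) (hg : ∀ x, |g x| ≤ K)
    (ht : 0 ≤ t) (n : ℕ) :
    (Measure.pi fun _ : Fin n => discMeasure p).real {D | t ≤ |∑ i, (g (D i) - ∑ x, p x * g x)|}
      ≤ 2 * Real.exp (-t ^ 2 / (2 * (n * K ^ 2))) := by
  have := isProbabilityMeasure_discMeasure hp
  have hneg := measureReal_le_sum_sub_mean_le hp (g := -g) (K := K)
    (fun x => (abs_neg (g x)).trans_le (hg x)) ht n
  refine (measureReal_mono fun D hD => ?_).trans ((measureReal_union_le _ _).trans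
    ((add_le_add (measureReal_le_sum_sub_mean_le hp hg ht n) hneg).trans_eq (two_mul _).symm))
  rw [Set.mem_ofPred_eq, le_abs, ← Finset.sum_neg_distrib] at hD
  refine hD.imp id fun h => ?_
  simpa only [Set.mem_ofPred_eq, Pi.neg_apply, mul_neg, Finset.sum_neg_distrib, ← neg_sub',
    neg_sub_neg, ← neg_sub (g _)] using h

lemma measure_exists_abs_empMean_sub_gt_le {ι : Type*} (hp : p ∈ stdSimplex ℝ X) {F : Finset ι}
    {g : ι → X → ℝ} (hg : ∀ i ∈ F, ∀ x, |g i x| ≤ K) (hK : 0 < K) (hδ : 0 < δ) (hn : 0 < n) :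
    (Measure.pi fun _ : Fin n => discMeasure p)
        {D | ∃ i ∈ F, K * √(2 * Real.log (4 * F.card / δ) / n)
          < |empMean D (g i) - ∑ x, p x * g i x|}
      ≤ ENNReal.ofReal (δ / 2) := by
  have := isProbabilityMeasure_discMeasure hp
  rcases F.eq_empty_or_nonempty with rfl | hF
  · simp
  have hn' : (0 : ℝ) < n := Nat.cast_pos.2 hn
  set t := n * (K * √(2 * Real.log (4 * F.card / δ) / n))
  have hcover : {D : Fin n → X | ∃ i ∈ F, K * √(2 * Real.log (4 * F.card / δ) / n)
        < |empMean D (g i) - ∑ x, p x * g i x|}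
      ⊆ ⋃ i ∈ F, {D | t ≤ |∑ j, (g i (D j) - ∑ x, p x * g i x)|} := by
    rintro D ⟨i, hi, hD⟩
    refine Set.mem_biUnion hi ?_
    rw [empMean_sub_eq hn, abs_mul, abs_of_pos (inv_pos.2 hn'), lt_inv_mul_iff₀ hn'] at hD
    exact hD.le
  rw [ENNReal.le_ofReal_iff_toReal_le (measure_ne_top _ _) (by positivity)]
  calc (Measure.pi fun _ : Fin n => discMeasure p).real _
      ≤ ∑ i ∈ F, (Measure.pi fun _ : Fin n => discMeasure p).real
          {D | t ≤ |∑ j, (g i (D j) - ∑ x, p x * g i x)|} :=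
        (measureReal_mono hcover (measure_ne_top _ _)).trans (measureReal_biUnion_finset_le _ _)
    _ ≤ ∑ _i ∈ F, 2 * (δ / (4 * F.card)) := by
        gcongr with i hi
        exact (measureReal_le_abs_sum_sub_mean_le hp (hg i hi) (by positivity) n).trans
          (mul_le_mul_of_nonneg_left
            (exp_neg_sq_radius_le hK hδ (Nat.cast_pos.2 hF.card_pos) hn) zero_le_two)
    _ = δ / 2 := by
        rw [Finset.sum_const, nsmul_eq_mul]
        field_simp
        norm_num

end Concentration

section SampleTerm

variable {S A : Type*} {r : S → A → ℝ} {γ : ℝ} {w : S → A → ℝ} {f : ℝ → ℝ} {α Bw Bf Bv : ℝ}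
  {v : S → ℝ} {n n0 : ℕ}

/-- The contribution of one transition tuple `((s, a), s')` to the empirical Lagrangian. -/
noncomputable def tupleLag (r : S → A → ℝ) (γ : ℝ) (f : ℝ → ℝ) (α : ℝ) (v : S → ℝ)
    (w : S → A → ℝ) (x : (S × A) × S) : ℝ :=
  w x.1.1 x.1.2 * (r x.1.1 x.1.2 + γ * v x.2 - v x.1.1) - α * f (w x.1.1 x.1.2)

lemma empLag_eq_empMean (D : Fin n → (S × A) × S) (D0 : Fin n0 → S) (v : S → ℝ)
    (w : S → A → ℝ) :
    empLag r γ f α D D0 v w = (1 - γ) * empMean D0 v + empMean D (tupleLag r γ f α v w) := by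
  simp only [empLag, empMean, tupleLag, Finset.sum_sub_distrib, ← Finset.mul_sum]
  ring

lemma abs_tupleLag_le (hγ : 0 ≤ γ) (hr : ∀ s a, r s a ∈ Set.Icc 0 1)
    (hf : ∀ x ∈ Set.Icc 0 Bw, |f x| ≤ Bf) (hα : 0 ≤ α) (hw : ∀ s a, w s a ∈ Set.Icc 0 Bw)
    (hv : ∀ s, |v s| ≤ Bv) (x : (S × A) × S) :
    |tupleLag r γ f α v w x| ≤ α * Bf + Bw * ((1 + γ) * Bv + 1) := by
  obtain ⟨⟨s, a⟩, s'⟩ := x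
  have hresidual : |r s a + γ * v s' - v s| ≤ (1 + γ) * Bv + 1 := by
    calc |r s a + γ * v s' - v s| ≤ |r s a| + |γ * v s'| + |v s| :=
          (abs_sub _ _).trans (add_le_add_left (abs_add_le _ _) _)
      _ ≤ 1 + γ * Bv + Bv := by
          rw [abs_mul, abs_of_nonneg hγ, abs_of_nonneg (hr s a).1]
          gcongr
          exacts [(hr s a).2, hv s', hv s]
      _ = (1 + γ) * Bv + 1 := by ring
  calc |tupleLag r γ f α v w ((s, a), s')|
      ≤ |w s a * (r s a + γ * v s' - v s)| + |α * f (w s a)| := abs_sub _ _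
    _ = w s a * |r s a + γ * v s' - v s| + α * |f (w s a)| := by
        rw [abs_mul, abs_mul, abs_of_nonneg (hw s a).1, abs_of_nonneg hα]
    _ ≤ Bw * ((1 + γ) * Bv + 1) + α * Bf := by
        gcongr
        exacts [(hw s a).1.trans (hw s a).2, (hw s a).2, hf _ (hw s a)]
    _ = α * Bf + Bw * ((1 + γ) * Bv + 1) := add_comm _ _

end SampleTerm

section Empirical

variable {P : S → A → S → ℝ} {r : S → A → ℝ} {μ0 : S → ℝ} {γ : ℝ} {dD w : S → A → ℝ}
  {f : ℝ → ℝ} {α Bw Bf Bv : ℝ} {v : S → ℝ} {n n0 : ℕ}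

lemma tupleWeight_mem_stdSimplex (hP : ∀ s a, P s a ∈ stdSimplex ℝ S)
    (hdD : Function.uncurry dD ∈ stdSimplex ℝ (S × A)) :
    tupleWeight P dD ∈ stdSimplex ℝ ((S × A) × S) :=
  mul_kernel_mem_stdSimplex hdD fun x => hP x.1 x.2

lemma Lag_eq_sum_tupleWeight_mul (hP : ∀ s a, ∑ s', P s a s' = 1) (v : S → ℝ) (w : S → A → ℝ) :
    Lag P r μ0 γ dD f α v w = (1 - γ) * ∑ s, μ0 s * v s
      + ∑ x, tupleWeight P dD x * tupleLag r γ f α v w x := by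
  have hcond (s : S) (a : A) :
      ∑ s', tupleWeight P dD ((s, a), s') * tupleLag r γ f α v w ((s, a), s')
        = dD s a * (w s a * eV P r γ v s a) - α * (dD s a * f (w s a)) := by
    calc ∑ s', tupleWeight P dD ((s, a), s') * tupleLag r γ f α v w ((s, a), s')
        = ∑ s', (P s a s' * (dD s a * (w s a * (r s a - v s)) - α * (dD s a * f (w s a)))
            + dD s a * w s a * γ * (P s a s' * v s')) := by
          refine Finset.sum_congr rfl fun s' _ => ?_
          rw [tupleWeight, tupleLag]
          ring
      _ = dD s a * (w s a * eV P r γ v s a) - α * (dD s a * f (w s a)) := by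
          rw [Finset.sum_add_distrib, ← Finset.sum_mul, ← Finset.mul_sum, hP, eV]
          ring
  simp only [Fintype.sum_prod_type, hcond, Finset.sum_sub_distrib, ← Finset.mul_sum, Lag]
  ring

lemma IsProRLOutput.Lag_sub_le {V : Finset (S → ℝ)} {W : Finset (S → A → ℝ)}
    {D : Fin n → (S × A) × S} {D0 : Fin n0 → S} {vhat : S → ℝ} {what : S → A → ℝ} {η : ℝ}
    (hout : IsProRLOutput r γ f α V W D D0 vhat what)
    (hmin : ∀ v', Lag P r μ0 γ dD f α v w ≤ Lag P r μ0 γ dD f α v' w) (hv : v ∈ V) (hw : w ∈ W)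
    (hη : ∀ v ∈ V, ∀ w ∈ W, |empLag r γ f α D D0 v w - Lag P r μ0 γ dD f α v w| ≤ η) :
    Lag P r μ0 γ dD f α v w - Lag P r μ0 γ dD f α v what ≤ 2 * η := by
  obtain ⟨u, hu, humin⟩ := V.exists_min_image (empLag r γ f α D D0 · w) ⟨v, hv⟩
  have hempirical : empLag r γ f α D D0 u w ≤ empLag r γ f α D D0 v what :=
    (hout.2.2.2 w hw u hu humin).trans (hout.2.2.1 v hv)
  have hwhat := (abs_le.1 (hη v hv what hout.2.1)).2
  have hsaddle := (abs_le.1 (hη u hu w hw)).1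
  linarith [hmin u]

lemma one_sub_le_dataMeasure_abs_empLag_sub_le [MeasurableSpace S] [MeasurableSpace A]
    [MeasurableSingletonClass S] [MeasurableSingletonClass A] {V : Finset (S → ℝ)}
    {W : Finset (S → A → ℝ)} {δ : ℝ} (hM : IsDiscountedMDP P μ0 γ)
    (hr : ∀ s a, r s a ∈ Set.Icc 0 1) (hdD : Function.uncurry dD ∈ stdSimplex ℝ (S × A))
    (hf : ∀ x ∈ Set.Icc 0 Bw, |f x| ≤ Bf) (hW : ∀ w ∈ W, ∀ s a, w s a ∈ Set.Icc 0 Bw)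
    (hV : ∀ v ∈ V, ∀ s, |v s| ≤ Bv) (hα : 0 < α) (hBf : 0 < Bf) (hBv : 0 < Bv) (hBw : 0 ≤ Bw)
    (hδ : 0 < δ) (hn : 0 < n) (hn0 : 0 < n0) :
    1 - ENNReal.ofReal δ ≤ dataMeasure P dD μ0 n n0 {ω | ∀ v ∈ V, ∀ w ∈ W,
      |empLag r γ f α ω.1 ω.2 v w - Lag P r μ0 γ dD f α v w|
        ≤ epsStat γ α Bv Bf Bw ((1 + γ) * Bv + 1) δ V.card W.card n n0} := by
  have hγ : 0 ≤ 1 - γ := sub_nonneg.2 hM.γ_lt_one.le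
  have htuple := tupleWeight_mem_stdSimplex hM.transition_mem hdD
  have := isProbabilityMeasure_discMeasure htuple
  have := isProbabilityMeasure_discMeasure hM.initial_mem
  have hK : 0 < α * Bf + Bw * ((1 + γ) * Bv + 1) := by
    have := hM.γ_nonneg
    positivity
  have htransitions := measure_exists_abs_empMean_sub_gt_le htuple (F := V ×ˢ W)
    (g := fun i => tupleLag r γ f α i.1 i.2) (fun i hi => abs_tupleLag_le hM.γ_nonneg hr hf hα.le
      (hW _ (Finset.mem_product.1 hi).2) (hV _ (Finset.mem_product.1 hi).1)) hK hδ hn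
  have hinitial := measure_exists_abs_empMean_sub_gt_le hM.initial_mem (g := id) hV hBv hδ hn0
  have hgood := one_sub_add_le_measure_prod htransitions hinitial
  rw [← ENNReal.ofReal_add (by positivity) (by positivity), add_halves] at hgood
  refine hgood.trans (measure_mono ?_)
  rintro ω ⟨hω, hω0⟩ v hv w hw
  simp only [Set.mem_ofPred_eq, not_exists, not_and, not_lt] at hω hω0
  have hsample := hω (v, w) (Finset.mem_product.2 ⟨hv, hw⟩)
  rw [Finset.card_product, Nat.cast_mul] at hsample
  rw [empLag_eq_empMean, Lag_eq_sum_tupleWeight_mul fun s a => (hM.transition_mem s a).2,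
    add_sub_add_comm, ← mul_sub, epsStat, mul_assoc (1 - γ)]
  refine (abs_add_le _ _).trans (add_le_add ?_ hsample)
  rw [abs_mul, abs_of_nonneg hγ]
  exact mul_le_mul_of_nonneg_left (hω0 v hv) hγ

end Empirical

section SampleSize

lemma mul_sqrt_two_mul_div_le {K L c x : ℝ} (hc : 0 < c) (hx : 0 < x)
    (h : 2 * K ^ 2 / c ^ 2 * L ≤ x) : K * √(2 * L / x) ≤ c := by
  refine le_of_abs_le (abs_le_of_sq_le_sq ?_ hc.le)
  rw [mul_pow, Real.sq_sqrt', mul_max_of_nonneg _ _ (sq_nonneg K), mul_zero]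
  refine max_le ?_ (sq_nonneg c)
  rw [div_mul_eq_mul_div, div_le_iff₀ (pow_pos hc 2)] at h
  rw [← mul_div_assoc, div_le_iff₀ hx]
  linarith

lemma epsStat_le_of_sampleSize_le {γ ε δ Bw Mf Bf Bv Be : ℝ} {nV nW n n0 : ℕ} (hγ : γ < 1)
    (hε : 0 < ε) (hMf : 0 < Mf) (hBf : 0 < Bf) (hn : 0 < n) (hn0 : 0 < n0)
    (hsize : 2 ^ 17 * (ε * Bf + 4 * Bw * Be * Bf) ^ 2 / (ε ^ 6 * Mf ^ 2 * (1 - γ) ^ 4)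
      * Real.log (4 * (nV : ℝ) * (nW : ℝ) / δ) ≤ (n : ℝ))
    (hsize0 : 2 ^ 17 * (4 * Bv * Bf) ^ 2 / (ε ^ 6 * Mf ^ 2 * (1 - γ) ^ 2)
      * Real.log (4 * (nV : ℝ) / δ) ≤ (n0 : ℝ)) :
    epsStat γ (ε / (4 * Bf)) Bv Bf Bw Be δ nV nW n n0
      ≤ ε ^ 3 * (1 - γ) ^ 2 * Mf / (512 * Bf) := by
  have hγ' : 0 < 1 - γ := sub_pos.2 hγ
  set c := ε ^ 3 * (1 - γ) ^ 2 * Mf / (1024 * Bf) with hc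
  have hc0 : 0 < c := by positivity
  have hcoef : 2 ^ 17 * (ε * Bf + 4 * Bw * Be * Bf) ^ 2 / (ε ^ 6 * Mf ^ 2 * (1 - γ) ^ 4)
      = 2 * (ε / (4 * Bf) * Bf + Bw * Be) ^ 2 / c ^ 2 := by
    rw [hc]
    field_simp
    ring
  have hcoef0 : 2 ^ 17 * (4 * Bv * Bf) ^ 2 / (ε ^ 6 * Mf ^ 2 * (1 - γ) ^ 2)
      = 2 * ((1 - γ) * Bv) ^ 2 / c ^ 2 := by
    rw [hc]
    field_simp
    ring
  rw [hcoef, mul_assoc 4] at hsize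
  rw [hcoef0] at hsize0
  calc epsStat γ (ε / (4 * Bf)) Bv Bf Bw Be δ nV nW n n0 ≤ c + c :=
        add_le_add (mul_sqrt_two_mul_div_le hc0 (Nat.cast_pos.2 hn0) hsize0)
          (mul_sqrt_two_mul_div_le hc0 (Nat.cast_pos.2 hn) hsize)
    _ = ε ^ 3 * (1 - γ) ^ 2 * Mf / (512 * Bf) := by
        rw [hc]
        ring

end SampleSize

section Regularizer

variable {f f' : ℝ → ℝ} {Mf Bw Bf' Bf α γ : ℝ}

lemma RegAssumptions.strongConvexOn_Icc (hf : RegAssumptions f f' Mf Bw Bf' Bf) :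
    StrongConvexOn (Set.Icc 0 Bw) Mf f :=
  ⟨convex_Icc _ _, fun _ _ _ _ => hf.strong.2 trivial trivial⟩

lemma RegAssumptions.valueBound_pos (hf : RegAssumptions f f' Mf Bw Bf' Bf) (hBw : 0 ≤ Bw)
    (hα : 0 ≤ α) (hγ : γ < 1) : 0 < (α * Bf' + 1) / (1 - γ) := by
  have hBf' : 0 ≤ Bf' := (abs_nonneg _).trans (hf.f'_bdd 0 le_rfl hBw)
  exact div_pos (by positivity) (sub_pos.2 hγ)

end Regularizer

theorem stmt7_general {S A : Type*} [Fintype S] [Fintype A] [Nonempty A]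
    [MeasurableSpace S] [MeasurableSpace A]
    [MeasurableSingletonClass S] [MeasurableSingletonClass A]
    {P : S → A → S → ℝ} {r : S → A → ℝ} {μ0 : S → ℝ} {γ : ℝ} {dD : S → A → ℝ}
    (hM : IsDiscountedMDP P μ0 γ) (hr : ∀ s a, r s a ∈ Set.Icc 0 1)
    (hdD : Function.uncurry dD ∈ stdSimplex ℝ (S × A))
    {f : ℝ → ℝ} {ε δ Bw Mf Bf Bv Be : ℝ} (hε : 0 < ε) (hδ : 0 < δ) (hBw : 0 ≤ Bw) (hMf : 0 < Mf)
    (hBf : 0 < Bf) (hBv : 0 < Bv) (hstrong : StrongConvexOn (Set.Icc 0 Bw) Mf f)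
    (hf : ∀ x ∈ Set.Icc 0 Bw, |f x| ≤ Bf) (hBe : Be = (1 + γ) * Bv + 1)
    {w0 : S → A → ℝ} (hw0 : ∀ s a, w0 s a ∈ Set.Icc 0 Bw)
    (hflow0 : BellmanFlow P μ0 γ (dstar dD w0))
    {v : S → ℝ} {w : S → A → ℝ} (hsad : IsSaddleB P r μ0 γ dD f (ε / (4 * Bf)) Bw v w)
    {V : Finset (S → ℝ)} {W : Finset (S → A → ℝ)} (hv : v ∈ V) (hw : w ∈ W)
    (hW : ∀ w ∈ W, ∀ s a, w s a ∈ Set.Icc 0 Bw) (hV : ∀ v ∈ V, ∀ s, |v s| ≤ Bv)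
    {n n0 : ℕ} (hn : 0 < n) (hn0 : 0 < n0)
    (hsize : 2 ^ 17 * (ε * Bf + 4 * Bw * Be * Bf) ^ 2 / (ε ^ 6 * Mf ^ 2 * (1 - γ) ^ 4)
      * Real.log (4 * (V.card : ℝ) * (W.card : ℝ) / δ) ≤ (n : ℝ))
    (hsize0 : 2 ^ 17 * (4 * Bv * Bf) ^ 2 / (ε ^ 6 * Mf ^ 2 * (1 - γ) ^ 2)
      * Real.log (4 * (V.card : ℝ) / δ) ≤ (n0 : ℝ)) :
    1 - ENNReal.ofReal δ ≤ dataMeasure P dD μ0 n n0 {ω | ∀ vhat what,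
      IsProRLOutput r γ f (ε / (4 * Bf)) V W ω.1 ω.2 vhat what →
        Jret P r μ0 γ (extractPolicy (behPolicy dD) w0)
          - Jret P r μ0 γ (extractPolicy (behPolicy dD) what) ≤ ε} := by
  subst hBe
  have hα : 0 < ε / (4 * Bf) := by positivity
  have hstat := epsStat_le_of_sampleSize_le hM.γ_lt_one hε hMf hBf hn hn0 hsize hsize0
  refine (one_sub_le_dataMeasure_abs_empLag_sub_le hM hr hdD hf hW hV hα hBf hBv hBw hδ hn
    hn0).trans (measure_mono fun ω hω vhat what hout => ?_)
  have hgap := calc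
    Lag P r μ0 γ dD f (ε / (4 * Bf)) v w - Lag P r μ0 γ dD f (ε / (4 * Bf)) v what
      ≤ 2 * (ε ^ 3 * (1 - γ) ^ 2 * Mf / (512 * Bf)) :=
        (hout.Lag_sub_le hsad.2.1 hv hw hω).trans (mul_le_mul_of_nonneg_left hstat zero_le_two)
    _ = ε / (4 * Bf) * Mf / 4 * ((1 - γ) * (ε / 2) / 2) ^ 2 := by
        field_simp
        ring
  have hestimation := hsad.Jret_extractPolicy_sub_le_of_Lag_sub_le hM hr hdD hstrong hα hMf
    (half_pos hε).le (hW what hout.2.1) hgap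
  have hbias := hsad.Jret_extractPolicy_sub_le hM hdD hf hα.le hw0 hflow0
  have hhalf : 2 * (ε / (4 * Bf) * Bf) = ε / 2 := by
    field_simp
    norm_num
  linarith

/-- Corollary 3: competing with the best `B_w`-covered policy. -/
theorem stmt7 :
    ∃ C1 : ℝ, 0 < C1 ∧
    ∀ (S A : Type) [Fintype S] [Fintype A] [Nonempty S] [Nonempty A]
      [MeasurableSpace S] [MeasurableSpace A]
      [MeasurableSingletonClass S] [MeasurableSingletonClass A]
      (P : S → A → S → ℝ) (r : S → A → ℝ) (μ0 : S → ℝ) (γ : ℝ) (dD : S → A → ℝ),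
      MDPAssumptions P r μ0 γ dD →
      -- the data distribution is the occupancy of the behavior policy
      (∀ s a, dD s a = occ P μ0 γ (behPolicy dD) s a) →
      ∀ (f f' : ℝ → ℝ) (ε δ Bw : ℝ), 0 < ε → 0 < δ → δ < 1 → 1 < Bw →
      ∀ (Mf Bf' Bf Bv Be : ℝ), 0 < Bf →
      -- regularity of f on [0, B_w], with α'_ε := ε/(4 B_f)
      RegAssumptions f f' Mf Bw Bf' Bf →
      Bv = (ε / (4 * Bf) * Bf' + 1) / (1 - γ) → Be = (1 + γ) * Bv + 1 →
      -- saddle point of the constrained LP at α = 0 (defines π*_{0,B_w})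
      ∀ (v0st : S → ℝ) (w0st : S → A → ℝ),
        IsSaddleB P r μ0 γ dD f 0 Bw v0st w0st →
      -- saddle point of the constrained LP at α = α'_ε, with realizability
      ∀ (vst : S → ℝ) (wst : S → A → ℝ),
        IsSaddleB P r μ0 γ dD f (ε / (4 * Bf)) Bw vst wst →
      ∀ (V : Finset (S → ℝ)) (W : Finset (S → A → ℝ)),
        vst ∈ V → wst ∈ W →
        (∀ w ∈ W, ∀ s a, 0 ≤ w s a ∧ w s a ≤ Bw) →
        (∀ v ∈ V, ∀ s, |v s| ≤ Bv) →
      ∀ (n n0 : ℕ), 0 < n → 0 < n0 →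
        C1 * (ε * Bf + 4 * Bw * Be * Bf) ^ 2 / (ε ^ 6 * Mf ^ 2 * (1 - γ) ^ 4)
            * Real.log (4 * (V.card : ℝ) * (W.card : ℝ) / δ) ≤ (n : ℝ) →
        C1 * (4 * Bv * Bf) ^ 2 / (ε ^ 6 * Mf ^ 2 * (1 - γ) ^ 2)
            * Real.log (4 * (V.card : ℝ) / δ) ≤ (n0 : ℝ) →
      ∀ (vhat : (Fin n → (S × A) × S) × (Fin n0 → S) → S → ℝ)
        (what : (Fin n → (S × A) × S) × (Fin n0 → S) → S → A → ℝ),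
        (∀ ω, IsProRLOutput r γ f (ε / (4 * Bf)) V W ω.1 ω.2 (vhat ω) (what ω)) →
        1 - ENNReal.ofReal δ ≤
          dataMeasure P dD μ0 n n0 {ω |
            Jret P r μ0 γ (extractPolicy (behPolicy dD) w0st)
              - Jret P r μ0 γ (extractPolicy (behPolicy dD) (what ω)) ≤ ε } := by
  refine ⟨2 ^ 17, by norm_num, ?_⟩
  intro S A _ _ _ _ _ _ _ _ P r μ0 γ dD h _ f f' ε δ Bw hε hδ _ hBw Mf Bf' Bf Bv Be hBf hf hBv
    hBe v0st w0st hsad0 vst wst hsad V W hvst hwst hW hV n n0 hn hn0 hsize hsize0 vhat what hout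
  have hBw0 : 0 ≤ Bw := zero_le_one.trans hBw.le
  have hBv0 : 0 < Bv := hBv ▸ hf.valueBound_pos hBw0 (by positivity) h.γ_lt_one
  exact (stmt7_general h.isDiscountedMDP (fun s a => ⟨h.r_nonneg s a, h.r_le_one s a⟩)
    h.uncurry_mem_stdSimplex hε hδ hBw0 hf.Mf_pos hBf hBv0 hf.strongConvexOn_Icc
    (fun x hx => hf.f_bdd x hx.1 hx.2) hBe hsad0.1 (bellmanFlow_of_forall_Lag_le hsad0.2.1) hsad
    hvst hwst hW hV hn hn0 hsize hsize0).trans (measure_mono fun ω hω => hω _ _ (hout ω))
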